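/- arXiv:2103.03605 — 3 statements merged into one kernel-verified Lean document; each statement's English description precedes it below -/
import Mathlib

section
/- Fix ε > 0, let α₁, α₂, … be a sequence of elements of 𝒦, and let γ₁, γ₂, … be a sequence of real numbers. Then for Lebesgue-almost all β ∈ ℝ, for every i ∈ ℕ and every δ ∈ ℝ, the inequality n·‖nα_i − γ_i‖·‖nβ − δ‖ < (log log log n)^{ε + 1/2} / (log n)^{1/2} has infinitely many solutions n ∈ ℕ. -/
open Filter MeasureTheory Real

/-- Distance from `x` to the nearest integer, `‖x‖ = min {|x - k| : k ∈ ℤ}`. -/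
noncomputable def dni (x : ℝ) : ℝ := |x - round x|

/-- The set of badly approximable numbers. -/
noncomputable def Bad : Set ℝ :=
  {α : ℝ | 0 < Filter.atTop.liminf (fun n : ℕ => (n : ℝ) * dni (n * α))}

/-- The `t`-th continued fraction convergent denominator `q_t(α)` of `α`. -/
noncomputable def qden (α : ℝ) (t : ℕ) : ℝ := (GenContFract.of α).dens t

/-- The set `𝒦` of irrationals whose convergent denominators grow at most exponentially. -/
noncomputable def KSet : Set ℝ :=
  {α : ℝ | Irrational α ∧ ∃ C : ℝ, ∀ t : ℕ, 1 ≤ t → Real.log (qden α t) / t ≤ C}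

/-!
The inhomogeneous condition on `α` is solved along a lacunary sequence: if `p / q` is a convergent
of `α`, choosing `m ∈ [q, 2q)` with `m p` congruent modulo `q` to the integer nearest to
`q γ` gives `m ‖m α - γ‖ ≤ 5`. Taking every fourth convergent makes the resulting `n_k` satisfy
`n_{k+1} ≥ 2 n_k`, and `log n_k = O(k)` since `α ∈ 𝒦`.

For a lacunary sequence the events `{n_k x} ∈ I` have exponentially decaying correlations, so by
Chebyshev's inequality the probability that none of `N` of them occurs is `O(1 / (N |I|))`. Cutting
`[0, 1)` into `R` intervals, a block of `N = A R²` indices starting at `A R²` visits all of them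
outside a set of measure `O(1 / A)`; the length `1 / R` is then comparable to `√(A / k)` throughout
the block, uniformly in the target `δ`. Letting `R → ∞` and then `A → ∞` gives, for almost every
`x`, a constant `c` such that every `δ` satisfies `√k ‖n_k x - δ‖ ≤ c` infinitely often. A constant
numerator therefore suffices in place of the power of `log log log n`.
-/

/-! ### Convergents of continued fractions -/

section ContinuedFraction

open GenContFract

variable {K : Type*} [Field K] [LinearOrder K] [IsStrictOrderedRing K] [FloorRing K] {v : K}

theorem exists_int_get?_eq_of_not_terminatedAt {n : ℕ} (hv : ¬(GenContFract.of v).TerminatedAt n) :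
    ∃ z : ℤ, 1 ≤ z ∧ (GenContFract.of v).s.get? n = some ⟨1, (z : K)⟩ := by
  obtain ⟨⟨a, b⟩, hab⟩ := Option.ne_none_iff_exists'.1 hv
  obtain ⟨rfl, z, rfl⟩ := of_partNum_eq_one_and_exists_int_partDen_eq hab
  have hz : (1 : K) ≤ z := of_one_le_get?_partDen (partDen_eq_s_b hab)
  exact ⟨z, mod_cast hz, hab⟩

theorem exists_int_eq_nums_dens (hv : ¬(GenContFract.of v).Terminates) (n : ℕ) :
    ∃ p q : ℤ, (GenContFract.of v).nums n = p ∧ (GenContFract.of v).dens n = q := by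
  have hget n := exists_int_get?_eq_of_not_terminatedAt (v := v) (n := n) fun h ↦ hv ⟨n, h⟩
  induction n using Nat.twoStepInduction with
  | zero => exact ⟨⌊v⌋, 1, by simp, by simp⟩
  | one =>
    obtain ⟨z, -, hz⟩ := hget 0
    exact ⟨z * ⌊v⌋ + 1, z, by simp [first_num_eq hz], by simp [first_den_eq hz]⟩
  | more n ih₀ ih₁ =>
    obtain ⟨p₀, q₀, hp₀, hq₀⟩ := ih₀
    obtain ⟨p₁, q₁, hp₁, hq₁⟩ := ih₁
    obtain ⟨z, -, hz⟩ := hget (n + 1)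
    exact ⟨z * p₁ + p₀, z * q₁ + q₀, by simp [nums_recurrence hz hp₀ hp₁],
      by simp [dens_recurrence hz hq₀ hq₁]⟩

theorem one_le_dens_of_not_terminates (hv : ¬(GenContFract.of v).Terminates) (n : ℕ) :
    1 ≤ (GenContFract.of v).dens n := by
  have hfib := succ_nth_fib_le_of_nth_den (v := v) (n := n) (.inr fun h ↦ hv ⟨_, h⟩)
  have hpos : 1 ≤ Nat.fib (n + 1) := Nat.fib_pos.2 n.succ_pos
  exact le_trans (mod_cast hpos) hfib

theorem two_mul_dens_le_dens_add_two (hv : ¬(GenContFract.of v).Terminates) (n : ℕ) :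
    2 * (GenContFract.of v).dens n ≤ (GenContFract.of v).dens (n + 2) := by
  obtain ⟨z, hz, hget⟩ :=
    exists_int_get?_eq_of_not_terminatedAt (v := v) (n := n + 1) fun h ↦ hv ⟨_, h⟩
  have hz' : (1 : K) ≤ z := mod_cast hz
  have hnonneg : 0 ≤ (GenContFract.of v).dens (n + 1) := zero_le_of_den
  calc 2 * (GenContFract.of v).dens n
      = (GenContFract.of v).dens n + (GenContFract.of v).dens n := two_mul _
    _ ≤ z * (GenContFract.of v).dens (n + 1) + (GenContFract.of v).dens n := by
      gcongr
      exact of_den_mono.trans (le_mul_of_one_le_left hnonneg hz')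
    _ = (GenContFract.of v).dens (n + 2) := by simp [dens_recurrence hget rfl rfl]

theorem exists_isCoprime_abs_sub_div_dens_le (hv : ¬(GenContFract.of v).Terminates) (n : ℕ) :
    ∃ p q : ℤ, (GenContFract.of v).dens n = q ∧ 0 < q ∧ IsCoprime p q ∧
      |v - p / q| ≤ 1 / (q : K) ^ 2 := by
  have hterm : ¬(GenContFract.of v).TerminatedAt n := fun h ↦ hv ⟨n, h⟩
  obtain ⟨p, q, hp, hq⟩ := exists_int_eq_nums_dens hv n
  obtain ⟨p', q', hp', hq'⟩ := exists_int_eq_nums_dens hv (n + 1)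
  have hdet : p * q' - q * p' = (-1) ^ (n + 1) := by
    have h : (GenContFract.of v).nums n * (GenContFract.of v).dens (n + 1) -
        (GenContFract.of v).dens n * (GenContFract.of v).nums (n + 1) = (-1) ^ (n + 1) :=
      SimpContFract.determinant (s := SimpContFract.of v) hterm
    rw [hp, hq, hp', hq'] at h
    exact_mod_cast h
  have hq_pos : (0 : K) < q := hq ▸ zero_lt_one.trans_le (one_le_dens_of_not_terminates hv n)
  refine ⟨p, q, hq, mod_cast hq_pos, ⟨(-1) ^ (n + 1) * q', -(-1) ^ (n + 1) * p', ?_⟩, ?_⟩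
  · have hsq : (-1 : ℤ) ^ (n + 1) * (-1) ^ (n + 1) = 1 := by simp [← mul_pow]
    linear_combination (-1) ^ (n + 1) * hdet + hsq
  · have hle : (q : K) ≤ (GenContFract.of v).dens (n + 1) := hq ▸ of_den_mono
    calc |v - p / q| = |v - (GenContFract.of v).convs n| := by rw [conv_eq_num_div_den, hp, hq]
      _ ≤ 1 / (q * (GenContFract.of v).dens (n + 1)) := hq ▸ abs_sub_convs_le hterm
      _ ≤ 1 / (q : K) ^ 2 := by
        rw [sq]
        gcongr

end ContinuedFraction

theorem not_terminates_of_irrational {α : ℝ} (hα : Irrational α) :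
    ¬(GenContFract.of α).Terminates := by
  rw [GenContFract.terminates_iff_rat]
  rintro ⟨r, hr⟩
  exact hα ⟨r, hr.symm⟩

/-! ### Inhomogeneous approximation along a lacunary sequence -/

theorem dni_le_abs_sub_intCast (x : ℝ) (m : ℤ) : dni x ≤ |x - m| := round_le x m

theorem dni_nonneg (x : ℝ) : 0 ≤ dni x := abs_nonneg _

theorem dni_sub_intCast (x : ℝ) (m : ℤ) : dni (x - m) = dni x := by
  simp [dni]

theorem exists_nat_lt_two_mul_mul_modEq {p q : ℤ} (hq : 0 < q) (hpq : IsCoprime p q) (j : ℤ) :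
    ∃ m : ℕ, q ≤ m ∧ m < 2 * q ∧ m * p ≡ j [ZMOD q] := by
  obtain ⟨u, v, huv⟩ := hpq
  obtain ⟨z, hz_lt, hz⟩ := Int.existsUnique_equiv_nat (j * u) hq
  refine ⟨q.toNat + z, by omega, by omega, ?_⟩
  have hup : u * p ≡ 1 [ZMOD q] := Int.modEq_iff_dvd.2 ⟨v, by linear_combination -huv⟩
  rw [Nat.cast_add, Int.toNat_of_nonneg hq.le]
  calc (q + z) * p ≡ (0 + j * u) * p [ZMOD q] := by gcongr; simp [Int.ModEq]
    _ = j * (u * p) := by ring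
    _ ≡ j * 1 [ZMOD q] := hup.mul_left j
    _ = j := mul_one j

theorem exists_nat_mul_dni_le {α : ℝ} {p q : ℤ} (hq : 0 < q) (hpq : IsCoprime p q)
    (hα : |α - p / q| ≤ 1 / (q : ℝ) ^ 2) (γ : ℝ) :
    ∃ m : ℕ, (q : ℝ) ≤ m ∧ (m : ℝ) ≤ 2 * q ∧ m * dni (m * α - γ) ≤ 5 := by
  obtain ⟨j, hj⟩ : ∃ j : ℤ, |q * γ - j| ≤ 1 / 2 := ⟨round (q * γ), abs_sub_round _⟩
  obtain ⟨m, hqm, hmq, hm⟩ := exists_nat_lt_two_mul_mul_modEq hq hpq j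
  obtain ⟨w, hw⟩ := hm.symm.dvd
  have hw' : (m : ℝ) * p - j = q * w := mod_cast hw
  have hq_pos : (0 : ℝ) < q := mod_cast hq
  have hqm' : (q : ℝ) ≤ m := mod_cast hqm
  have hmq' : (m : ℝ) ≤ 2 * q := mod_cast hmq.le
  have hsplit : m * α - γ - w = m * (α - p / q) + (j - q * γ) / q := by
    field_simp
    linear_combination hw'
  have hdni : dni (m * α - γ) ≤ 5 / 2 / q := by
    calc dni (m * α - γ) ≤ |m * α - γ - w| := dni_le_abs_sub_intCast _ w
      _ ≤ |m * (α - p / q)| + |(j - q * γ) / q| := hsplit ▸ abs_add_le _ _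
      _ = m * |α - p / q| + |q * γ - j| / q := by
        rw [abs_mul, Nat.abs_cast, abs_div, abs_of_pos hq_pos, abs_sub_comm (j : ℝ)]
      _ ≤ 2 * q * (1 / (q : ℝ) ^ 2) + 1 / 2 / q := by
        gcongr
      _ = 5 / 2 / q := by field_simp; norm_num
  refine ⟨m, hqm', hmq', ?_⟩
  calc m * dni (m * α - γ) ≤ 2 * q * (5 / 2 / q) := by
        gcongr
        exact dni_nonneg _
    _ = 5 := by field_simp

/-- Hadamard lacunarity with ratio `ρ`: the sequence `n` is positive and each term is at least `ρ`
times the preceding one. -/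
structure IsLacunary (ρ : ℝ) (n : ℕ → ℕ) : Prop where
  pos : ∀ k, 0 < n k
  mul_le_succ : ∀ k, ρ * n k ≤ n (k + 1)

namespace IsLacunary

variable {ρ : ℝ} {n : ℕ → ℕ}

theorem strictMono (hn : IsLacunary ρ n) (hρ : 1 < ρ) : StrictMono n :=
  strictMono_nat_of_lt_succ fun k ↦ by
    have hpos : (0 : ℝ) < n k := mod_cast hn.pos k
    exact_mod_cast (lt_mul_of_one_lt_left hpos hρ).trans_le (hn.mul_le_succ k)

theorem pow_mul_le_add (hn : IsLacunary ρ n) (hρ : 0 ≤ ρ) (j d : ℕ) :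
    ρ ^ d * n j ≤ n (j + d) := by
  induction d with
  | zero => simp
  | succ d ih =>
    calc ρ ^ (d + 1) * n j = ρ * (ρ ^ d * n j) := by ring
      _ ≤ ρ * n (j + d) := by gcongr
      _ ≤ n (j + d + 1) := hn.mul_le_succ (j + d)

end IsLacunary

theorem exists_isLacunary_of_mem_KSet {α : ℝ} (hα : α ∈ KSet) (γ : ℝ) :
    ∃ n : ℕ → ℕ, IsLacunary 2 n ∧ (∀ k, n k * dni (n k * α - γ) ≤ 5) ∧
      (fun k ↦ log (n k)) =O[atTop] (fun k ↦ (k : ℝ)) := by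
  obtain ⟨hirr, C, hC⟩ := hα
  have hα := not_terminates_of_irrational hirr
  have hqden : ∀ t, ∃ m : ℕ, qden α t ≤ m ∧ (m : ℝ) ≤ 2 * qden α t ∧
      m * dni (m * α - γ) ≤ 5 := fun t ↦ by
    obtain ⟨p, q, hq, hq_pos, hpq, happrox⟩ := exists_isCoprime_abs_sub_div_dens_le hα t
    rw [qden, hq]
    exact exists_nat_mul_dni_le hq_pos hpq happrox γ
  have hqden_one_le : ∀ t, 1 ≤ qden α t := one_le_dens_of_not_terminates hα
  have hqden_two_mul_le : ∀ t, 2 * qden α t ≤ qden α (t + 2) := two_mul_dens_le_dens_add_two hα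
  choose n hn_ge hn_le hn_dni using hqden
  -- Two steps double `qden`; two more absorb the factor `2` lost in `n t ≤ 2 * qden α t`.
  refine ⟨fun k ↦ n (4 * k), ⟨fun k ↦ ?_, fun k ↦ ?_⟩, fun k ↦ hn_dni _, ?_⟩
  · exact_mod_cast zero_lt_one.trans_le ((hqden_one_le _).trans (hn_ge (4 * k)))
  · calc (2 : ℝ) * n (4 * k) ≤ 2 * (2 * qden α (4 * k)) := by gcongr; exact hn_le _
      _ ≤ 2 * qden α (4 * k + 2) := by gcongr; exact hqden_two_mul_le _
      _ ≤ qden α (4 * (k + 1)) := hqden_two_mul_le (4 * k + 2)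
      _ ≤ n (4 * (k + 1)) := hn_ge _
  · refine .of_bound (1 + 4 * C) ?_
    filter_upwards [eventually_ge_atTop 1] with k hk
    have hk' : (1 : ℝ) ≤ k := mod_cast hk
    have hn_pos : (0 : ℝ) < n (4 * k) := by linarith [hqden_one_le (4 * k), hn_ge (4 * k)]
    have hlog_qden : log (qden α (4 * k)) ≤ C * (4 * k) := by
      have := hC (4 * k) (by omega)
      rwa [div_le_iff₀ (by positivity), Nat.cast_mul, Nat.cast_ofNat] at this
    rw [norm_of_nonneg (log_natCast_nonneg _), norm_of_nonneg (by positivity)]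
    calc log (n (4 * k)) ≤ log (2 * qden α (4 * k)) := log_le_log hn_pos (hn_le _)
      _ = log 2 + log (qden α (4 * k)) :=
        log_mul two_ne_zero (zero_lt_one.trans_le (hqden_one_le _)).ne'
      _ ≤ 1 * k + C * (4 * k) := by linarith [log_two_lt_d9]
      _ = (1 + 4 * C) * k := by ring

/-! ### Second moments and independence modulo one -/

section SecondMoment

open ProbabilityTheory

variable {Ω ι : Type*} [MeasurableSpace Ω] {μ : Measure Ω} [IsProbabilityMeasure μ]

theorem covariance_indicator_one {A B : Set Ω} (hA : MeasurableSet A) (hB : MeasurableSet B) :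
    cov[A.indicator 1, B.indicator 1; μ] = μ.real (A ∩ B) - μ.real A * μ.real B := by
  have hmemLp {C : Set Ω} (hC : MeasurableSet C) : MemLp (C.indicator (1 : Ω → ℝ)) 2 μ :=
    memLp_indicator_const 2 hC 1 (.inr (measure_ne_top μ _))
  rw [covariance_eq_sub (hmemLp hA) (hmemLp hB), ← Set.inter_indicator_one,
    integral_indicator_one (hA.inter hB), integral_indicator_one hA, integral_indicator_one hB]

theorem sq_mul_measureReal_iInter_compl_le_sum {s : Finset ι} {A : ι → Set Ω}
    (hA : ∀ i ∈ s, MeasurableSet (A i)) :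
    (∑ i ∈ s, μ.real (A i)) ^ 2 * μ.real (⋂ i ∈ s, (A i)ᶜ) ≤
      ∑ i ∈ s, ∑ j ∈ s, (μ.real (A i ∩ A j) - μ.real (A i) * μ.real (A j)) := by
  set X : Ω → ℝ := ∑ i ∈ s, (A i).indicator 1
  set m := ∑ i ∈ s, μ.real (A i)
  have hmemLp : ∀ i ∈ s, MemLp ((A i).indicator (1 : Ω → ℝ)) 2 μ := fun i hi ↦
    memLp_indicator_const 2 (hA i hi) 1 (.inr (measure_ne_top μ _))
  have hmean : μ[X] = m := by
    simp only [X, Finset.sum_apply]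
    rw [integral_finsetSum _ fun i hi ↦ (hmemLp i hi).integrable one_le_two]
    exact Finset.sum_congr rfl fun i hi ↦ integral_indicator_one (hA i hi)
  have hvar : Var[X; μ] =
      ∑ i ∈ s, ∑ j ∈ s, (μ.real (A i ∩ A j) - μ.real (A i) * μ.real (A j)) := by
    rw [variance_sum' hmemLp]
    exact Finset.sum_congr rfl fun i hi ↦ Finset.sum_congr rfl fun j hj ↦
      covariance_indicator_one (hA i hi) (hA j hj)
  rw [← hvar]
  obtain hm | hm : 0 = m ∨ 0 < m :=
    (Finset.sum_nonneg fun i _ ↦ measureReal_nonneg : 0 ≤ m).eq_or_lt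
  · simp [← hm, variance_nonneg]
  have hsub : ⋂ i ∈ s, (A i)ᶜ ⊆ {x | m ≤ |X x - μ[X]|} := fun x hx ↦ by
    have hzero : X x = 0 := by
      simp only [X, Finset.sum_apply]
      exact Finset.sum_eq_zero fun i hi ↦ Set.indicator_of_notMem (Set.mem_iInter₂.1 hx i hi) _
    rw [Set.mem_ofPred_eq, hzero, hmean, zero_sub, abs_neg]
    exact le_abs_self m
  rw [mul_comm, ← le_div_iff₀ (by positivity)]
  exact (measureReal_mono hsub).trans <|
    ENNReal.toReal_le_of_le_ofReal (div_nonneg (variance_nonneg _ _) (sq_nonneg m))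
      (meas_ge_le_variance_div_sq (memLp_finsetSum' s hmemLp) hm)

end SecondMoment

theorem sum_pow_le_inv_one_sub_of_injOn {ι : Type*} {r : ℝ} (hr₀ : 0 ≤ r) (hr₁ : r < 1)
    {s : Finset ι} {f : ι → ℕ} (hf : Set.InjOn f s) : ∑ i ∈ s, r ^ f i ≤ (1 - r)⁻¹ := by
  classical
  rw [← Finset.sum_image (f := fun i ↦ r ^ i) hf, ← tsum_geometric_of_lt_one hr₀ hr₁]
  exact (summable_geometric_of_lt_one hr₀ hr₁).sum_le_tsum _ fun i _ ↦ by positivity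

theorem sum_pow_dist_le {r : ℝ} (hr₀ : 0 ≤ r) (hr₁ : r < 1) (s : Finset ℕ) (j : ℕ) :
    ∑ k ∈ s, r ^ Nat.dist j k ≤ 2 * (1 - r)⁻¹ := by
  have hle : Set.InjOn (Nat.dist j) (s.filter (· ≤ j)) := by
    intro a ha b hb hab
    simp only [Finset.coe_filter, Set.mem_ofPred_eq, Nat.dist] at ha hb hab
    omega
  have hgt : Set.InjOn (Nat.dist j) (s.filter (¬ · ≤ j)) := by
    intro a ha b hb hab
    simp only [Finset.coe_filter, Set.mem_ofPred_eq, Nat.dist] at ha hb hab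
    omega
  rw [← Finset.sum_filter_add_sum_filter_not s (· ≤ j), two_mul]
  exact add_le_add (sum_pow_le_inv_one_sub_of_injOn hr₀ hr₁ hle)
    (sum_pow_le_inv_one_sub_of_injOn hr₀ hr₁ hgt)

/-- Lebesgue measure on the unit interval `[0, 1)`, standing for Haar measure on `ℝ / ℤ`. -/
noncomputable abbrev unitMeasure : Measure ℝ := volume.restrict (Set.Ico 0 1)

instance : IsProbabilityMeasure unitMeasure := ⟨by simp⟩

/-- The set of `x` such that `t * x` lies in `S` modulo one; only `S ∩ [0, 1)` matters. -/
def modOnePreimage (t : ℝ) (S : Set ℝ) : Set ℝ := {x | Int.fract (t * x) ∈ S}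

theorem measurableSet_modOnePreimage (t : ℝ) {S : Set ℝ} (hS : MeasurableSet S) :
    MeasurableSet (modOnePreimage t S) :=
  (measurable_fract.comp (measurable_const_mul t)) hS

theorem volume_real_preimage_fract_inter_Ico_add_one {S : Set ℝ} (hS : MeasurableSet S) (k : ℤ) :
    volume.real (Int.fract ⁻¹' S ∩ Set.Ico (k : ℝ) (k + 1)) = unitMeasure.real S := by
  have hshift : Int.fract ⁻¹' S ∩ Set.Ico (k : ℝ) (k + 1) =
      (· + -(k : ℝ)) ⁻¹' (S ∩ Set.Ico 0 1) := by
    ext x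
    have hfract (h : ⌊x⌋ = k) : Int.fract x = x + -k := by
      rw [← Int.self_sub_floor, h, sub_eq_add_neg]
    simp only [Set.mem_inter_iff, Set.mem_preimage, Set.mem_Ico, ← Int.floor_eq_iff,
      ← sub_eq_add_neg, sub_nonneg, sub_lt_iff_lt_add']
    exact and_congr_left fun h ↦ by rw [hfract h, sub_eq_add_neg]
  rw [hshift, measureReal_def, measure_preimage_add_right, measureReal_restrict_apply hS,
    measureReal_def]

theorem volume_real_preimage_fract_inter_Ico_add_natCast {S : Set ℝ} (hS : MeasurableSet S)
    (k : ℤ) (N : ℕ) :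
    volume.real (Int.fract ⁻¹' S ∩ Set.Ico (k : ℝ) (k + N)) = N * unitMeasure.real S := by
  induction N with
  | zero => simp
  | succ N ih =>
    have hIco : Set.Ico (k : ℝ) (k + (N + 1 : ℕ)) =
        Set.Ico (k : ℝ) (k + N) ∪ Set.Ico ((k + N : ℤ) : ℝ) ((k + N : ℤ) + 1) := by
      push_cast
      rw [Set.Ico_union_Ico_eq_Ico (by simp) (by simp), add_assoc]
    have hdisj : Disjoint (Int.fract ⁻¹' S ∩ Set.Ico (k : ℝ) (k + N))
        (Int.fract ⁻¹' S ∩ Set.Ico ((k + N : ℤ) : ℝ) ((k + N : ℤ) + 1)) := by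
      refine Disjoint.mono Set.inter_subset_right Set.inter_subset_right ?_
      push_cast
      exact Set.Ico_disjoint_Ico_same
    rw [hIco, Set.inter_union_distrib_left,
      measureReal_union hdisj ((measurable_fract hS).inter measurableSet_Ico)
        (measure_ne_top_of_subset Set.inter_subset_right measure_Ico_lt_top.ne)
        (measure_ne_top_of_subset Set.inter_subset_right measure_Ico_lt_top.ne),
      ih, volume_real_preimage_fract_inter_Ico_add_one hS]
    push_cast
    ring

theorem volume_real_preimage_fract_inter_Ico_le {S : Set ℝ} (hS : MeasurableSet S) {a b : ℝ}
    (hab : a ≤ b) :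
    volume.real (Int.fract ⁻¹' S ∩ Set.Ico a b) ≤ (b - a + 2) * unitMeasure.real S := by
  obtain ⟨N, hN⟩ := Int.eq_ofNat_of_zero_le
    (show 0 ≤ ⌊b⌋ + 1 - ⌊a⌋ by linarith [Int.floor_mono hab])
  have hN' : (⌊a⌋ : ℝ) + N = ⌊b⌋ + 1 := by
    have : ⌊a⌋ + (N : ℤ) = ⌊b⌋ + 1 := by omega
    exact_mod_cast this
  have hsub : Set.Ico a b ⊆ Set.Ico (⌊a⌋ : ℝ) (⌊a⌋ + N) :=
    Set.Ico_subset_Ico (Int.floor_le a) (hN' ▸ (Int.lt_floor_add_one b).le)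
  calc volume.real (Int.fract ⁻¹' S ∩ Set.Ico a b)
      ≤ volume.real (Int.fract ⁻¹' S ∩ Set.Ico (⌊a⌋ : ℝ) (⌊a⌋ + N)) :=
        measureReal_mono (Set.inter_subset_inter_right _ hsub)
          (measure_ne_top_of_subset Set.inter_subset_right measure_Ico_lt_top.ne)
    _ = N * unitMeasure.real S := volume_real_preimage_fract_inter_Ico_add_natCast hS _ _
    _ ≤ (b - a + 2) * unitMeasure.real S := by
        gcongr
        linarith [Int.floor_le b, Int.lt_floor_add_one a]

theorem volume_real_modOnePreimage_inter_Ico {t : ℝ} (ht : 0 < t) (S : Set ℝ) (a b : ℝ) :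
    volume.real (modOnePreimage t S ∩ Set.Ico a b) =
      t⁻¹ * volume.real (Int.fract ⁻¹' S ∩ Set.Ico (t * a) (t * b)) := by
  have hpre : modOnePreimage t S ∩ Set.Ico a b =
      (t * ·) ⁻¹' (Int.fract ⁻¹' S ∩ Set.Ico (t * a) (t * b)) := by
    ext x
    simp [modOnePreimage, mul_le_mul_iff_right₀ ht, mul_lt_mul_iff_right₀ ht]
  rw [hpre, measureReal_def, volume_preimage_mul_left ht.ne', ENNReal.toReal_mul,
    ENNReal.toReal_ofReal (abs_nonneg _), abs_of_pos (inv_pos.2 ht), measureReal_def]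

theorem volume_real_modOnePreimage_inter_Ico_le {t : ℝ} (ht : 0 < t) {S : Set ℝ}
    (hS : MeasurableSet S) {a b : ℝ} (hab : a ≤ b) :
    volume.real (modOnePreimage t S ∩ Set.Ico a b) ≤ (b - a + 2 / t) * unitMeasure.real S := by
  rw [volume_real_modOnePreimage_inter_Ico ht]
  calc t⁻¹ * volume.real (Int.fract ⁻¹' S ∩ Set.Ico (t * a) (t * b))
      ≤ t⁻¹ * ((t * b - t * a + 2) * unitMeasure.real S) := by
        gcongr
        exact volume_real_preimage_fract_inter_Ico_le hS (by gcongr)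
    _ = (b - a + 2 / t) * unitMeasure.real S := by field_simp

theorem unitMeasure_real_modOnePreimage {n : ℕ} (hn : 0 < n) {S : Set ℝ} (hS : MeasurableSet S) :
    unitMeasure.real (modOnePreimage n S) = unitMeasure.real S := by
  have hn' : (0 : ℝ) < n := mod_cast hn
  have hperiods := volume_real_preimage_fract_inter_Ico_add_natCast hS 0 n
  rw [Int.cast_zero, zero_add] at hperiods
  rw [measureReal_restrict_apply (measurableSet_modOnePreimage _ hS),
    volume_real_modOnePreimage_inter_Ico hn', mul_zero, mul_one, hperiods,
    inv_mul_cancel_left₀ hn'.ne']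

theorem modOnePreimage_Ico_inter_Ico_subset {n : ℕ} (hn : 0 < n) (a b : ℝ) :
    modOnePreimage n (Set.Ico a b) ∩ Set.Ico 0 1 ⊆
      ⋃ m ∈ Finset.range n, Set.Ico ((m + a) / n : ℝ) ((m + b) / n) := by
  rintro x ⟨⟨hax, hxb⟩, hx₀, hx₁⟩
  have hn' : (0 : ℝ) < n := mod_cast hn
  have hnx : 0 ≤ n * x := by positivity
  have hfract : Int.fract (n * x) = n * x - ⌊n * x⌋₊ := by
    rw [← Int.self_sub_floor, ← natCast_floor_eq_intCast_floor hnx]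
  rw [hfract] at hax hxb
  refine Set.mem_iUnion₂.2 ⟨⌊n * x⌋₊, Finset.mem_range.2 ?_, ?_⟩
  · rw [Nat.floor_lt hnx]
    exact mul_lt_of_lt_one_right hn' hx₁
  · rw [Set.mem_Ico, div_le_iff₀ hn', lt_div_iff₀ hn', mul_comm x]
    constructor <;> linarith

theorem unitMeasure_real_modOnePreimage_inter_le {n : ℕ} {t : ℝ} (hn : 0 < n) (ht : 0 < t)
    {a b : ℝ} (hab : a ≤ b) {S : Set ℝ} (hS : MeasurableSet S) :
    unitMeasure.real (modOnePreimage n (Set.Ico a b) ∩ modOnePreimage t S) ≤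
      (b - a + 2 * (n / t)) * unitMeasure.real S := by
  have : (0 : ℝ) < n := mod_cast hn
  set J : ℕ → Set ℝ := fun m ↦ Set.Ico ((m + a) / n : ℝ) ((m + b) / n)
  have hsub : modOnePreimage n (Set.Ico a b) ∩ modOnePreimage t S ∩ Set.Ico 0 1 ⊆
      ⋃ m ∈ Finset.range n, modOnePreimage t S ∩ J m := by
    rw [← Set.inter_iUnion₂, Set.inter_assoc, Set.inter_left_comm]
    exact Set.inter_subset_inter_right _ (modOnePreimage_Ico_inter_Ico_subset hn a b)
  have hfinite : volume (⋃ m ∈ Finset.range n, modOnePreimage t S ∩ J m) ≠ ⊤ :=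
    (measure_biUnion_lt_top (Finset.finite_toSet _) fun m _ ↦
      (measure_mono Set.inter_subset_right).trans_lt measure_Ico_lt_top).ne
  rw [measureReal_restrict_apply
    ((measurableSet_modOnePreimage _ measurableSet_Ico).inter (measurableSet_modOnePreimage _ hS))]
  calc volume.real (modOnePreimage n (Set.Ico a b) ∩ modOnePreimage t S ∩ Set.Ico 0 1)
      ≤ ∑ m ∈ Finset.range n, volume.real (modOnePreimage t S ∩ J m) :=
        (measureReal_mono hsub hfinite).trans (measureReal_biUnion_finset_le _ _)
    _ ≤ ∑ m ∈ Finset.range n, ((m + b) / n - (m + a) / n + 2 / t) * unitMeasure.real S := by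
        gcongr
        exact volume_real_modOnePreimage_inter_Ico_le ht hS (by gcongr)
    _ = (b - a + 2 * (n / t)) * unitMeasure.real S := by
        simp only [← sub_div, add_sub_add_left_eq_sub, Finset.sum_const, Finset.card_range,
          nsmul_eq_mul]
        field_simp

theorem unitMeasure_real_Ico {a b : ℝ} (ha : 0 ≤ a) (hab : a ≤ b) (hb : b ≤ 1) :
    unitMeasure.real (Set.Ico a b) = b - a := by
  rw [measureReal_restrict_apply measurableSet_Ico,
    Set.inter_eq_left.2 (Set.Ico_subset_Ico ha hb), volume_real_Ico_of_le hab]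

theorem ae_of_ae_unitMeasure_of_periodic {p : ℝ → Prop} (hp : Function.Periodic p 1)
    (h : ∀ᵐ x ∂unitMeasure, p x) : ∀ᵐ x : ℝ, p x := by
  have hshift : ∀ m : ℤ, ∀ᵐ x : ℝ, x - m ∈ Set.Ico 0 1 → p (x - m) := fun m ↦
    (measurePreserving_sub_right volume (m : ℝ)).quasiMeasurePreserving.ae
      ((ae_restrict_iff' measurableSet_Ico).1 h)
  filter_upwards [ae_all_iff.2 hshift] with x hx
  have hfract : p (x - ⌊x⌋) := hx ⌊x⌋ ⟨Int.fract_nonneg x, Int.fract_lt_one x⟩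
  rwa [← mul_one (⌊x⌋ : ℝ), hp.sub_int_mul_eq] at hfract

theorem dni_sub_le_abs_fract_sub_fract (x y : ℝ) : dni (x - y) ≤ |Int.fract x - Int.fract y| := by
  have hsplit : x - y - (⌊x⌋ - ⌊y⌋ : ℤ) = Int.fract x - Int.fract y := by
    rw [Int.cast_sub, ← Int.self_sub_floor, ← Int.self_sub_floor]
    ring
  exact hsplit ▸ dni_le_abs_sub_intCast (x - y) (⌊x⌋ - ⌊y⌋)

theorem exists_lt_fract_mem_Ico {R : ℕ} (hR : 0 < R) (δ : ℝ) :
    ∃ r < R, Int.fract δ ∈ Set.Ico (r / R : ℝ) ((r + 1) / R) := by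
  have hR' : (0 : ℝ) < R := mod_cast hR
  have hnonneg : 0 ≤ Int.fract δ * R := mul_nonneg (Int.fract_nonneg δ) hR'.le
  refine ⟨⌊Int.fract δ * R⌋₊, ?_, ?_, ?_⟩
  · rw [Nat.floor_lt hnonneg]
    exact mul_lt_of_lt_one_left hR' (Int.fract_lt_one δ)
  · rw [div_le_iff₀ hR']
    exact Nat.floor_le hnonneg
  · rw [lt_div_iff₀ hR']
    exact Nat.lt_floor_add_one _

/-! ### Inhomogeneous approximation by multiples of lacunary sequences -/

namespace IsLacunary

variable {ρ : ℝ} {n : ℕ → ℕ}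

theorem unitMeasure_real_inter_sub_mul_le (hn : IsLacunary ρ n) (hρ : 1 < ρ)
    {a b : ℝ} (ha : 0 ≤ a) (hab : a ≤ b) (hb : b ≤ 1) (j k : ℕ) :
    unitMeasure.real
        (modOnePreimage (n j) (Set.Ico a b) ∩ modOnePreimage (n k) (Set.Ico a b)) -
      unitMeasure.real (modOnePreimage (n j) (Set.Ico a b)) *
        unitMeasure.real (modOnePreimage (n k) (Set.Ico a b)) ≤
      2 * (b - a) * ρ⁻¹ ^ Nat.dist j k := by
  wlog hjk : j ≤ k generalizing j k
  · rw [Set.inter_comm, mul_comm (unitMeasure.real _), Nat.dist_comm]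
    exact this k j (le_of_not_ge hjk)
  obtain ⟨d, rfl⟩ := Nat.exists_eq_add_of_le hjk
  have hpos : (0 : ℝ) < n (j + d) := mod_cast hn.pos _
  have hratio : (n j : ℝ) / n (j + d) ≤ ρ⁻¹ ^ d := by
    rw [div_le_iff₀ hpos, inv_pow, inv_mul_eq_div, le_div_iff₀' (by positivity)]
    exact hn.pow_mul_le_add (by positivity) j d
  have hcorr := unitMeasure_real_modOnePreimage_inter_le (hn.pos j) hpos hab
    (measurableSet_Ico (a := a) (b := b))
  rw [unitMeasure_real_modOnePreimage (hn.pos _) measurableSet_Ico,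
    unitMeasure_real_modOnePreimage (hn.pos _) measurableSet_Ico,
    Nat.dist_eq_sub_of_le hjk, Nat.add_sub_cancel_left]
  rw [unitMeasure_real_Ico ha hab hb] at hcorr ⊢
  have := mul_le_mul_of_nonneg_left hratio (sub_nonneg.2 hab)
  linarith

theorem card_mul_unitMeasure_real_iInter_compl_le (hn : IsLacunary ρ n) (hρ : 1 < ρ)
    {a b : ℝ} (ha : 0 ≤ a) (hab : a < b) (hb : b ≤ 1) (s : Finset ℕ) :
    s.card * (b - a) * unitMeasure.real (⋂ k ∈ s, (modOnePreimage (n k) (Set.Ico a b))ᶜ) ≤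
      4 * (1 - ρ⁻¹)⁻¹ := by
  have hr₁ : ρ⁻¹ < 1 := inv_lt_one_of_one_lt₀ hρ
  obtain rfl | hs := s.eq_empty_or_nonempty
  · simpa using hr₁.le
  have hmean : ∑ k ∈ s, unitMeasure.real (modOnePreimage (n k) (Set.Ico a b)) =
      s.card * (b - a) := by
    simp only [unitMeasure_real_modOnePreimage (hn.pos _) measurableSet_Ico,
      unitMeasure_real_Ico ha hab.le hb, Finset.sum_const, nsmul_eq_mul]
  have hsecond : (s.card * (b - a)) ^ 2 *
      unitMeasure.real (⋂ k ∈ s, (modOnePreimage (n k) (Set.Ico a b))ᶜ) ≤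
        s.card * (b - a) * (4 * (1 - ρ⁻¹)⁻¹) := by
    rw [← hmean]
    refine (sq_mul_measureReal_iInter_compl_le_sum fun k _ ↦
      measurableSet_modOnePreimage _ measurableSet_Ico).trans ?_
    rw [hmean]
    calc _ ≤ ∑ j ∈ s, ∑ k ∈ s, 2 * (b - a) * ρ⁻¹ ^ Nat.dist j k := by
          gcongr with j _ k _
          exact hn.unitMeasure_real_inter_sub_mul_le hρ ha hab.le hb j k
      _ = ∑ j ∈ s, 2 * (b - a) * ∑ k ∈ s, ρ⁻¹ ^ Nat.dist j k := by simp only [Finset.mul_sum]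
      _ ≤ ∑ j ∈ s, 2 * (b - a) * (2 * (1 - ρ⁻¹)⁻¹) := by
          have := sub_nonneg.2 hab.le
          gcongr with j _
          exact sum_pow_dist_le (by positivity) hr₁ s j
      _ = s.card * (b - a) * (4 * (1 - ρ⁻¹)⁻¹) := by
          rw [Finset.sum_const, nsmul_eq_mul]
          ring
  have hpos : 0 < s.card * (b - a) := mul_pos (mod_cast hs.card_pos) (sub_pos.2 hab)
  refine le_of_mul_le_mul_left ?_ hpos
  linarith

theorem card_mul_unitMeasure_real_exists_forall_lt_dni_le (hn : IsLacunary ρ n)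
    (hρ : 1 < ρ) {R : ℕ} (hR : 0 < R) (s : Finset ℕ) :
    s.card * unitMeasure.real {x | ∃ δ, ∀ k ∈ s, 1 / R < dni (n k * x - δ)} ≤
      4 * (1 - ρ⁻¹)⁻¹ * R ^ 2 := by
  have hR' : (0 : ℝ) < R := mod_cast hR
  set missed : ℕ → Set ℝ := fun r ↦
    ⋂ k ∈ s, (modOnePreimage (n k) (Set.Ico (r / R : ℝ) ((r + 1) / R)))ᶜ
  have hsub : {x | ∃ δ, ∀ k ∈ s, 1 / R < dni (n k * x - δ)} ⊆ ⋃ r ∈ Finset.range R, missed r := by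
    rintro x ⟨δ, hδ⟩
    obtain ⟨r, hr, hδr⟩ := exists_lt_fract_mem_Ico hR δ
    refine Set.mem_iUnion₂.2 ⟨r, Finset.mem_range.2 hr, Set.mem_iInter₂.2 fun k hk hmem ↦ ?_⟩
    refine (hδ k hk).not_ge ((dni_sub_le_abs_fract_sub_fract _ _).trans ?_)
    obtain ⟨hlo, hhi⟩ : Int.fract (n k * x) ∈ Set.Ico (r / R : ℝ) ((r + 1) / R) := hmem
    have hlen : ((r + 1) / R : ℝ) = r / R + 1 / R := add_div _ _ _
    rw [abs_le]
    constructor <;> linarith [hδr.1, hδr.2]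
  have hmissed : ∀ r ∈ Finset.range R,
      s.card * unitMeasure.real (missed r) ≤ 4 * (1 - ρ⁻¹)⁻¹ * R := fun r hr ↦ by
    have hr' : (r : ℝ) + 1 ≤ R := mod_cast Finset.mem_range.1 hr
    have h := hn.card_mul_unitMeasure_real_iInter_compl_le hρ (a := r / R) (b := (r + 1) / R)
      (by positivity) (by gcongr; linarith) ((div_le_one hR').2 hr') s
    rw [← sub_div, add_sub_cancel_left, mul_one_div, div_mul_eq_mul_div, div_le_iff₀ hR'] at h
    exact h
  calc s.card * unitMeasure.real {x | ∃ δ, ∀ k ∈ s, 1 / R < dni (n k * x - δ)}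
      ≤ s.card * ∑ r ∈ Finset.range R, unitMeasure.real (missed r) := by
        gcongr
        exact (measureReal_mono hsub (measure_ne_top _ _)).trans (measureReal_biUnion_finset_le _ _)
    _ ≤ ∑ r ∈ Finset.range R, 4 * (1 - ρ⁻¹)⁻¹ * R := by
        rw [Finset.mul_sum]
        exact Finset.sum_le_sum hmissed
    _ = 4 * (1 - ρ⁻¹)⁻¹ * R ^ 2 := by
        rw [Finset.sum_const, Finset.card_range, nsmul_eq_mul]
        ring

theorem unitMeasure_real_exists_forall_ge_lt_sqrt_mul_dni_le (hn : IsLacunary ρ n)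
    (hρ : 1 < ρ) {A : ℕ} (hA : 0 < A) (M : ℕ) :
    unitMeasure.real {x | ∃ δ, ∀ k ≥ M, √(2 * A) < √k * dni (n k * x - δ)} ≤
      4 * (1 - ρ⁻¹)⁻¹ / A := by
  set R := M + 1
  have hA' : (0 : ℝ) < A := mod_cast hA
  have hR : (0 : ℝ) < R := by positivity
  set s := Finset.Ico (A * R ^ 2) (2 * (A * R ^ 2))
  have hcard : s.card = A * R ^ 2 := by simp only [s, Nat.card_Ico]; omega
  have hsub : {x | ∃ δ, ∀ k ≥ M, √(2 * A) < √k * dni (n k * x - δ)} ⊆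
      {x | ∃ δ, ∀ k ∈ s, 1 / R < dni (n k * x - δ)} := by
    rintro x ⟨δ, hδ⟩
    refine ⟨δ, fun k hk ↦ ?_⟩
    obtain ⟨hk_ge, hk_lt⟩ := Finset.mem_Ico.1 hk
    have hMk : M ≤ k := by
      calc M ≤ R ^ 2 := M.le_succ.trans (Nat.le_self_pow two_ne_zero R)
        _ ≤ A * R ^ 2 := Nat.le_mul_of_pos_left _ hA
        _ ≤ k := hk_ge
    have hsqrt : √k ≤ √(2 * A) * R := by
      rw [← sqrt_sq hR.le, ← sqrt_mul (by positivity)]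
      gcongr
      rw [mul_assoc]
      exact_mod_cast hk_lt.le
    have hlt : √(2 * A) * 1 < √(2 * A) * (R * dni (n k * x - δ)) := by
      calc √(2 * A) * 1 < √k * dni (n k * x - δ) := by simpa using hδ k hMk
        _ ≤ √(2 * A) * R * dni (n k * x - δ) := by gcongr; exact dni_nonneg _
        _ = √(2 * A) * (R * dni (n k * x - δ)) := mul_assoc _ _ _
    rw [div_lt_iff₀' hR]
    exact lt_of_mul_lt_mul_left hlt (sqrt_nonneg _)
  have hbound := hn.card_mul_unitMeasure_real_exists_forall_lt_dni_le hρ M.succ_pos s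
  rw [hcard, Nat.cast_mul, Nat.cast_pow] at hbound
  refine (measureReal_mono hsub).trans ?_
  rw [le_div_iff₀ hA']
  refine le_of_mul_le_mul_right ?_ (pow_pos hR 2)
  linarith

theorem unitMeasure_real_exists_eventually_lt_sqrt_mul_dni_le (hn : IsLacunary ρ n)
    (hρ : 1 < ρ) {A : ℕ} (hA : 0 < A) :
    unitMeasure.real {x | ∃ δ, ∀ᶠ k : ℕ in atTop, √(2 * A) < √k * dni (n k * x - δ)} ≤
      4 * (1 - ρ⁻¹)⁻¹ / A := by
  set B : ℕ → Set ℝ := fun M ↦ {x | ∃ δ, ∀ k ≥ M, √(2 * A) < √k * dni (n k * x - δ)}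
  have hB : Monotone B := fun M N hMN x ⟨δ, hδ⟩ ↦ ⟨δ, fun k hk ↦ hδ k (hMN.trans hk)⟩
  have hUnion : {x | ∃ δ, ∀ᶠ k : ℕ in atTop, √(2 * A) < √k * dni (n k * x - δ)} = ⋃ M, B M := by
    ext x
    simp only [B, eventually_atTop, Set.mem_iUnion, Set.mem_ofPred_eq]
    exact exists_comm
  rw [hUnion]
  exact le_of_tendsto' ((ENNReal.tendsto_toReal (measure_ne_top _ _)).comp
    (tendsto_measure_iUnion_atTop hB))
    (hn.unitMeasure_real_exists_forall_ge_lt_sqrt_mul_dni_le hρ hA)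

theorem ae_exists_forall_frequently_sqrt_mul_dni_le (hn : IsLacunary ρ n)
    (hρ : 1 < ρ) :
    ∀ᵐ x : ℝ, ∃ c, ∀ δ, ∃ᶠ k : ℕ in atTop, √k * dni (n k * x - δ) ≤ c := by
  refine ae_of_ae_unitMeasure_of_periodic (fun x ↦ ?_) ?_
  · have hshift (k : ℕ) (δ : ℝ) : dni (n k * (x + 1) - δ) = dni (n k * x - δ) := by
      rw [← dni_sub_intCast _ (n k)]
      congr 1
      push_cast
      ring
    simp only [hshift]
  have hle : unitMeasure.real
      {x | ¬∃ c, ∀ δ, ∃ᶠ k : ℕ in atTop, √k * dni (n k * x - δ) ≤ c} ≤ 0 := by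
    refine ge_of_tendsto (tendsto_const_div_atTop_nhds_zero_nat (4 * (1 - ρ⁻¹)⁻¹)) ?_
    filter_upwards [eventually_gt_atTop 0] with A hA
    refine (measureReal_mono fun x hx ↦ ?_).trans
      (hn.unitMeasure_real_exists_eventually_lt_sqrt_mul_dni_le hρ hA)
    simp only [Set.mem_ofPred_eq, not_exists, not_forall, not_frequently, not_le] at hx
    exact hx √(2 * A)
  rw [ae_iff]
  exact (measureReal_eq_zero_iff).1 (hle.antisymm measureReal_nonneg)

end IsLacunary

theorem ae_exists_forall_frequently_sqrt_log_mul_le {α : ℝ} (hα : α ∈ KSet) (γ : ℝ) :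
    ∀ᵐ β : ℝ, ∃ c, ∀ δ, ∃ᶠ n : ℕ in atTop,
      √(log n) * (n * dni (n * α - γ) * dni (n * β - δ)) ≤ c := by
  obtain ⟨n, hn, hbound, hlog⟩ := exists_isLacunary_of_mem_KSet hα γ
  obtain ⟨C, hC⟩ := hlog.bound
  filter_upwards [hn.ae_exists_forall_frequently_sqrt_mul_dni_le one_lt_two] with β ⟨c, hc⟩
  refine ⟨√C * 5 * c, fun δ ↦ ?_⟩
  refine (hn.strictMono one_lt_two).tendsto_atTop.frequently (((hc δ).and_eventually hC).mono ?_)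
  rintro k ⟨hdni, hlog_le⟩
  rw [norm_of_nonneg (log_natCast_nonneg _), norm_of_nonneg k.cast_nonneg] at hlog_le
  have hsqrt : √(log (n k)) ≤ √C * √k := by
    rw [← sqrt_mul' _ k.cast_nonneg]
    exact sqrt_le_sqrt hlog_le
  calc √(log (n k)) * (n k * dni (n k * α - γ) * dni (n k * β - δ))
      ≤ √C * √k * (5 * dni (n k * β - δ)) := by
        have := dni_nonneg (n k * α - γ)
        have := dni_nonneg (n k * β - δ)
        gcongr
        exact hbound k
    _ = √C * 5 * (√k * dni (n k * β - δ)) := by ring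
    _ ≤ √C * 5 * c := by gcongr

theorem frequently_lt_div_rpow_log_of_sqrt_log_mul_le {f ψ : ℕ → ℝ} {c : ℝ}
    (hf : ∃ᶠ n : ℕ in atTop, √(log n) * f n ≤ c) (hψ : Tendsto ψ atTop atTop) :
    ∃ᶠ n : ℕ in atTop, f n < ψ n / log n ^ ((1 : ℝ) / 2) := by
  refine (hf.and_eventually ((hψ.eventually_gt_atTop c).and (eventually_gt_atTop 1))).mono ?_
  rintro n ⟨hle, hlt, hn⟩
  have hlog : 0 < log n := log_pos (mod_cast hn)
  rw [← sqrt_eq_rpow, lt_div_iff₀' (sqrt_pos.2 hlog)]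
  exact hle.trans_lt hlt

theorem tendsto_log_log_log_natCast_rpow_atTop {s : ℝ} (hs : 0 < s) :
    Tendsto (fun n : ℕ ↦ log (log (log n)) ^ s) atTop atTop :=
  (tendsto_rpow_atTop hs).comp <| tendsto_log_atTop.comp <| tendsto_log_atTop.comp <|
    tendsto_log_atTop.comp tendsto_natCast_atTop_atTop

theorem stmt_2_general {ι : Type*} [Countable ι] (α γ : ι → ℝ) (hα : ∀ i, α i ∈ KSet) :
    ∀ᵐ β : ℝ, ∀ i, ∃ c, ∀ δ, ∃ᶠ n : ℕ in atTop,
      √(log n) * (n * dni (n * α i - γ i) * dni (n * β - δ)) ≤ c :=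
  ae_all_iff.2 fun i ↦ ae_exists_forall_frequently_sqrt_log_mul_le (hα i) (γ i)

theorem stmt_2 (ε : ℝ) (hε : 0 < ε) (α γ : ℕ → ℝ) (hα : ∀ i, α i ∈ KSet) :
    ∀ᵐ β : ℝ, ∀ i : ℕ, ∀ δ : ℝ,
      ∃ᶠ n : ℕ in Filter.atTop,
        (n : ℝ) * dni (n * α i - γ i) * dni (n * β - δ) <
          (Real.log (Real.log (Real.log n))) ^ (ε + 1/2) / (Real.log n) ^ ((1:ℝ)/2) := by
  filter_upwards [stmt_2_general α γ hα] with β hβ i δ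
  exact frequently_lt_div_rpow_log_of_sqrt_log_mul_le ((hβ i).choose_spec δ)
    (tendsto_log_log_log_natCast_rpow_atTop (by positivity))
end

section
/- Let α ∈ 𝒦, let q₀, q₁, q₂, … be the continued fraction denominators of α, put C = sup{t⁻¹ log q_t : t ∈ ℕ} ∈ (0, ∞), and let γ ∈ ℝ. Then there exists a sequence n₁, n₂, … of positive integers such that for every t ∈ ℕ: 8^t < n_t ≤ 4·e^{6Ct}, ‖n_t α − γ‖ ≤ 8/n_t, and n_{t+1} ≥ 2·n_t (so in particular the sequence is lacunary). -/
open Filter MeasureTheory Real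

/-!
Let `p` be an integer coprime to `q`. As `n` runs through `q` consecutive integers, `n * p` takes
every value mod `q`, so some such `n` puts `n * p / q` within `1 / (2 * q)` of `γ` modulo one. If
`p / q` is the `t`-th convergent of `α` and `n ∈ (q, 2 * q]`, replacing `p / q` by `α` costs at most
`n / q ^ 2 ≤ 2 / q`, so `n * α` is within `5 / (2 * q) ≤ 5 / n` of `γ` modulo one.
Since `q_{t + 2} ≥ 2 * q_t`, the denominators along every sixth convergent grow by a factor of at
least `8`, which absorbs the freedom of `n` in `(q, 2 * q]` and still gives `n_{t + 1} ≥ 2 * n_t`.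
-/

section Convergents

open GenContFract
open GenContFract (of)

variable {K : Type*} [Field K] [LinearOrder K] [FloorRing K]

theorem exists_intCast_contsAux_of (v : K) (n : ℕ) :
    ∃ a b : ℤ, (of v).contsAux n = ⟨(a : K), (b : K)⟩ := by
  induction n using Nat.twoStepInduction with
  | zero => exact ⟨1, 0, by simp⟩
  | one => exact ⟨⌊v⌋, 1, by simp [of_h_eq_floor]⟩
  | more n ih₀ ih₁ =>
    by_cases hterm : (of v).TerminatedAt n
    · rwa [contsAux_stable_step_of_terminated hterm]
    · obtain ⟨a₀, b₀, h₀⟩ := ih₀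
      obtain ⟨a₁, b₁, h₁⟩ := ih₁
      obtain ⟨gp, hgp⟩ := Option.ne_none_iff_exists'.1 hterm
      obtain ⟨hnum, z, hden⟩ := of_partNum_eq_one_and_exists_int_partDen_eq hgp
      refine ⟨z * a₁ + a₀, z * b₁ + b₀, ?_⟩
      rw [contsAux_recurrence hgp h₀ h₁, hnum, hden]
      push_cast
      simp only [one_mul]

theorem exists_intCast_nums_dens_of (v : K) (n : ℕ) :
    ∃ p q : ℤ, (of v).nums n = p ∧ (of v).dens n = q := by
  obtain ⟨p, q, h⟩ := exists_intCast_contsAux_of v (n + 1)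
  exact ⟨p, q, congrArg Pair.a h, congrArg Pair.b h⟩

theorem exists_isCoprime_nums_dens_of (v : K) (n : ℕ) :
    ∃ p q : ℤ, IsCoprime p q ∧ (of v).nums n = p ∧ (of v).dens n = q := by
  induction n with
  | zero => exact ⟨⌊v⌋, 1, isCoprime_one_right, by simp [of_h_eq_floor], by simp⟩
  | succ n ih =>
    by_cases hterm : (of v).TerminatedAt n
    · rwa [nums_stable_of_terminated n.le_succ hterm, dens_stable_of_terminated n.le_succ hterm]
    · obtain ⟨p₀, q₀, hp₀, hq₀⟩ := exists_intCast_nums_dens_of v n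
      obtain ⟨p, q, hp, hq⟩ := exists_intCast_nums_dens_of v (n + 1)
      have hdet : p₀ * q - q₀ * p = (-1) ^ (n + 1) := by
        have h := (SimpContFract.of v).determinant (n := n) hterm
        change (of v).nums n * (of v).dens (n + 1) - (of v).dens n * (of v).nums (n + 1) = _ at h
        rw [hp₀, hq₀, hp, hq] at h
        exact_mod_cast h
      have hsq : ((-1 : ℤ) ^ (n + 1)) * (-1) ^ (n + 1) = 1 := by
        rw [← mul_pow, neg_one_mul, neg_neg, one_pow]
      exact ⟨p, q, ⟨-q₀ * (-1) ^ (n + 1), p₀ * (-1) ^ (n + 1), by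
        linear_combination (-1) ^ (n + 1) * hdet + hsq⟩, hp, hq⟩

variable [IsStrictOrderedRing K]

theorem monotone_dens_of (v : K) : Monotone (of v).dens :=
  monotone_nat_of_le_succ fun _ => of_den_mono

theorem one_le_dens_of (v : K) (n : ℕ) : 1 ≤ (of v).dens n :=
  zeroth_den_eq_one.symm.trans_le (monotone_dens_of v n.zero_le)

theorem abs_sub_nums_div_dens_of_le (v : K) (n : ℕ) :
    |v - (of v).nums n / (of v).dens n| ≤ 1 / (of v).dens n ^ 2 := by
  have hpos : 0 < (of v).dens n := zero_lt_one.trans_le (one_le_dens_of v n)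
  rw [← conv_eq_num_div_den]
  by_cases hterm : (of v).TerminatedAt n
  · rw [← of_correctness_of_terminatedAt hterm, sub_self, abs_zero]
    positivity
  · calc |v - (of v).convs n| ≤ 1 / ((of v).dens n * (of v).dens (n + 1)) :=
          abs_sub_convs_le hterm
      _ ≤ 1 / (of v).dens n ^ 2 := by
          rw [sq]
          gcongr
          exact of_den_mono

theorem two_mul_dens_of_le {v : K} {n : ℕ} (h : ¬(of v).TerminatedAt (n + 1)) :
    2 * (of v).dens n ≤ (of v).dens (n + 2) := by
  obtain ⟨gp, hgp⟩ := Option.ne_none_iff_exists'.1 h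
  have hnum : gp.a = 1 := (of_partNum_eq_one_and_exists_int_partDen_eq hgp).1
  have hden : 1 ≤ gp.b := of_one_le_get?_partDen (partDen_eq_s_b hgp)
  calc 2 * (of v).dens n = 1 * (of v).dens n + (of v).dens n := by ring
    _ ≤ gp.b * (of v).dens (n + 1) + (of v).dens n := by
        gcongr
        · exact zero_le_of_den
        · exact of_den_mono
    _ = (of v).dens (n + 2) := by rw [dens_recurrence hgp rfl rfl, hnum, one_mul]

theorem two_pow_mul_dens_of_le {v : K} (h : ¬(of v).Terminates) (n k : ℕ) :
    2 ^ k * (of v).dens n ≤ (of v).dens (n + 2 * k) := by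
  induction k with
  | zero => simp
  | succ k ih =>
    calc 2 ^ (k + 1) * (of v).dens n = 2 * (2 ^ k * (of v).dens n) := by ring
      _ ≤ 2 * (of v).dens (n + 2 * k) := by gcongr
      _ ≤ (of v).dens (n + 2 * (k + 1)) := two_mul_dens_of_le fun hterm => h ⟨_, hterm⟩

end Convergents

theorem exists_mem_Ioc_mul_modEq {p q : ℤ} (hq : 0 < q) (hpq : IsCoprime p q) (c m : ℤ) :
    ∃ n ∈ Set.Ioc m (m + q), n * p ≡ c [ZMOD q] := by
  obtain ⟨u, v, huv⟩ := hpq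
  refine ⟨toIocMod hq m (c * u), toIocMod_mem_Ioc hq m _, Int.modEq_iff_dvd.2 ?_⟩
  refine ⟨c * v + toIocDiv hq m (c * u) * p, ?_⟩
  rw [← self_sub_toIocDiv_mul]
  linear_combination -c * huv

theorem exists_mem_Ioc_dni_mul_sub_le {p q : ℤ} (hq : 0 < q) (hpq : IsCoprime p q)
    (α γ : ℝ) (m : ℤ) :
    ∃ n ∈ Set.Ioc m (m + q), dni (n * α - γ) ≤ |(n : ℝ)| * |α - p / q| + 1 / (2 * q) := by
  obtain ⟨n, hn, hmod⟩ := exists_mem_Ioc_mul_modEq hq hpq (round (γ * q)) m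
  obtain ⟨k, hk⟩ := hmod.symm.dvd
  have hkR : (n : ℝ) * p - round (γ * q) = q * k := by exact_mod_cast hk
  have hqR : (0 : ℝ) < q := by exact_mod_cast hq
  have hsplit : n * α - γ - k = n * (α - p / q) - (γ * q - round (γ * q)) / q := by
    field_simp
    linear_combination hkR
  refine ⟨n, hn, ?_⟩
  calc dni (n * α - γ) ≤ |n * α - γ - k| := round_le _ k
    _ ≤ |n * (α - p / q)| + |(γ * q - round (γ * q)) / q| := hsplit ▸ abs_sub _ _
    _ = |(n : ℝ)| * |α - p / q| + |γ * q - round (γ * q)| / q := by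
        rw [abs_mul, abs_div, abs_of_pos hqR]
    _ ≤ |(n : ℝ)| * |α - p / q| + 1 / 2 / q := by
        gcongr
        exact abs_sub_round _
    _ = |(n : ℝ)| * |α - p / q| + 1 / (2 * q) := by rw [div_div]

theorem one_le_qden (α : ℝ) (t : ℕ) : 1 ≤ qden α t :=
  one_le_dens_of α t

theorem exists_nat_dni_mul_sub_le_of_qden (α γ : ℝ) (t : ℕ) :
    ∃ n : ℕ, qden α t < n ∧ n ≤ 2 * qden α t ∧ dni (n * α - γ) ≤ 5 / n := by
  obtain ⟨p, q, hpq, hp, hq⟩ := exists_isCoprime_nums_dens_of α t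
  change qden α t = q at hq
  have hqR : (0 : ℝ) < q := zero_lt_one.trans_le (hq ▸ one_le_qden α t)
  have happrox : |α - p / q| ≤ 1 / (q : ℝ) ^ 2 := hp ▸ hq ▸ abs_sub_nums_div_dens_of_le α t
  obtain ⟨n, ⟨hlt, hle⟩, hdni⟩ :=
    exists_mem_Ioc_dni_mul_sub_le (Int.cast_pos.1 hqR) hpq α γ q
  lift n to ℕ using by have := Int.cast_pos.1 hqR; omega
  have hltR : (q : ℝ) < n := by exact_mod_cast hlt
  have hleR : (n : ℝ) ≤ 2 * q := by rw [two_mul]; exact_mod_cast hle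
  rw [Int.cast_natCast, Nat.abs_cast] at hdni
  rw [hq]
  refine ⟨n, hltR, hleR, ?_⟩
  calc dni (n * α - γ) ≤ n * |α - p / q| + 1 / (2 * q) := hdni
    _ ≤ 2 * q * (1 / (q : ℝ) ^ 2) + 1 / (2 * q) := by gcongr
    _ = 5 / (2 * q) := by field_simp; norm_num
    _ ≤ 5 / n := by
        have hn : (0 : ℝ) < n := hqR.trans hltR
        gcongr

theorem two_pow_mul_qden_le_of_irrational {α : ℝ} (h : Irrational α) (t k : ℕ) :
    2 ^ k * qden α t ≤ qden α (t + 2 * k) := by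
  refine two_pow_mul_dens_of_le (fun hterm => h ?_) t k
  obtain ⟨r, hr⟩ := (GenContFract.terminates_iff_rat α).1 hterm
  exact ⟨r, hr.symm⟩

theorem qden_le_exp_of_log_div_le {α C : ℝ} {t : ℕ} (ht : 0 < t)
    (h : Real.log (qden α t) / t ≤ C) : qden α t ≤ Real.exp (C * t) := by
  rw [div_le_iff₀ (by exact_mod_cast ht)] at h
  exact (Real.log_le_iff_le_exp (zero_lt_one.trans_le (one_le_qden α t))).1 h

theorem stmt_4 (α : ℝ) (hα : α ∈ KSet) (C : ℝ)
    (hC : IsLUB {x : ℝ | ∃ t : ℕ, 1 ≤ t ∧ x = Real.log (qden α t) / t} C)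
    (hCpos : 0 < C) (γ : ℝ) :
    ∃ n : ℕ → ℕ, ∀ t : ℕ, 1 ≤ t →
      (8 : ℝ) ^ t < n t ∧
      (n t : ℝ) ≤ 4 * Real.exp (6 * C * t) ∧
      dni (n t * α - γ) ≤ 8 / n t ∧
      2 * n t ≤ n (t + 1) := by
  choose n hlt hle hdni using exists_nat_dni_mul_sub_le_of_qden α γ
  have hgrowth := two_pow_mul_qden_le_of_irrational hα.1
  refine ⟨fun t => n (6 * t), fun t ht => ⟨?_, ?_, (hdni _).trans (by gcongr; norm_num), ?_⟩⟩
  · calc (8 : ℝ) ^ t = 2 ^ (3 * t) := by rw [pow_mul]; norm_num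
      _ ≤ 2 ^ (3 * t) * qden α 0 := le_mul_of_one_le_right (by positivity) (one_le_qden α 0)
      _ ≤ qden α (0 + 2 * (3 * t)) := hgrowth 0 (3 * t)
      _ = qden α (6 * t) := by congr 1; ring
      _ < n (6 * t) := hlt _
  · calc (n (6 * t) : ℝ) ≤ 2 * qden α (6 * t) := hle _
      _ ≤ 2 * Real.exp (C * (6 * t : ℕ)) := by
          gcongr
          exact qden_le_exp_of_log_div_le (by omega) (hC.1 ⟨6 * t, by omega, rfl⟩)
      _ = 2 * Real.exp (6 * C * t) := by push_cast; ring_nf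
      _ ≤ 4 * Real.exp (6 * C * t) := by gcongr; norm_num
  · have hlac : (2 * n (6 * t) : ℝ) ≤ n (6 * (t + 1)) := by
      calc (2 * n (6 * t) : ℝ) ≤ 2 * (2 * qden α (6 * t)) := by gcongr; exact hle _
        _ ≤ 2 ^ 3 * qden α (6 * t) := by linarith [one_le_qden α (6 * t)]
        _ ≤ qden α (6 * (t + 1)) := hgrowth (6 * t) 3
        _ ≤ n (6 * (t + 1)) := (hlt _).le
    exact_mod_cast hlac
end

section
/- Let α be an irrational number with continued fraction denominators q₀, q₁, q₂, …, let γ ∈ ℝ, and let k ∈ ℕ. Then there exists an integer b with 1 ≤ b ≤ 2·q_k + q_{k−1} − 1 such that ‖bα − γ‖ ≤ 1/q_k. -/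
open Filter MeasureTheory Real

/-!
Write `q = q_k` and let `p / q` be the `k`-th convergent of `α`, so that `p` and `q` are coprime
and `|α - p / q| ≤ 1 / q ^ 2`. The numbers `b * p / q`, `1 ≤ b ≤ q`, run modulo `1` through all
multiples of `1 / q`, so one of them lies within `1 / (2 * q)` of any given target modulo `1`.
Since `b * (α - p / q)` lies within `q / 2 * |α - p / q| ≤ 1 / (2 * q)` of `q / 2 * (α - p / q)`,
whatever `b` is, the right target is `γ - q / 2 * (α - p / q)`: the two errors then add up to at
most `1 / q`.
-/

theorem exists_natCast_mul_modEq {p : ℤ} {q : ℕ} (hq : 0 < q) (hpq : IsCoprime p (q : ℤ)) (m : ℤ) :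
    ∃ b : ℕ, 1 ≤ b ∧ b ≤ q ∧ (b : ℤ) * p ≡ m [ZMOD q] := by
  obtain ⟨u, w, huw⟩ := hpq
  obtain ⟨c, hcq, hc⟩ := Int.existsUnique_equiv_nat (u * m - 1) (Int.natCast_pos.2 hq)
  refine ⟨c + 1, by lia, by lia, ?_⟩
  calc ((c + 1 : ℕ) : ℤ) * p
      ≡ (u * m - 1 + 1) * p [ZMOD q] := by
        push_cast
        exact (hc.add_right 1).mul_right p
    _ ≡ m [ZMOD q] := Int.modEq_iff_dvd.2 ⟨m * w, by linear_combination -m * huw⟩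

section

open GenContFract

variable {K : Type*} [Field K] [LinearOrder K] [FloorRing K]

theorem exists_of_contsAux_eq_intCast (v : K) (n : ℕ) :
    ∃ p q : ℤ, (GenContFract.of v).contsAux n = ⟨p, q⟩ := by
  induction n using Nat.twoStepInduction with
  | zero => exact ⟨1, 0, by simp [contsAux]⟩
  | one => exact ⟨⌊v⌋, 1, by simp [contsAux]⟩
  | more n ih ih' =>
    by_cases hterm : (GenContFract.of v).TerminatedAt n
    · rwa [contsAux_stable_step_of_terminated hterm]
    obtain ⟨p, q, hpq⟩ := ih
    obtain ⟨p', q', hpq'⟩ := ih'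
    obtain ⟨gp, hgp⟩ := Option.ne_none_iff_exists'.1 hterm
    obtain ⟨ha, z, hz⟩ := of_partNum_eq_one_and_exists_int_partDen_eq hgp
    refine ⟨z * p' + p, z * q' + q, ?_⟩
    rw [contsAux_recurrence hgp hpq hpq', ha, hz]
    push_cast
    simp only [one_mul]

theorem exists_of_nums_dens_eq_intCast (v : K) (n : ℕ) :
    ∃ p q : ℤ, (GenContFract.of v).nums n = p ∧ (GenContFract.of v).dens n = q := by
  obtain ⟨p, q, hpq⟩ := exists_of_contsAux_eq_intCast v (n + 1)
  exact ⟨p, q, by rw [num_eq_conts_a, nth_cont_eq_succ_nth_contAux, hpq],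
    by rw [den_eq_conts_b, nth_cont_eq_succ_nth_contAux, hpq]⟩

theorem exists_isCoprime_of_nums_dens_eq_intCast (v : K) (n : ℕ) :
    ∃ p q : ℤ, IsCoprime p q ∧
      (GenContFract.of v).nums n = p ∧ (GenContFract.of v).dens n = q := by
  induction n with
  | zero => exact ⟨⌊v⌋, 1, isCoprime_one_right, by simp, by simp⟩
  | succ n ih =>
    by_cases hterm : (GenContFract.of v).TerminatedAt n
    · rwa [nums_stable_of_terminated n.le_succ hterm, dens_stable_of_terminated n.le_succ hterm]
    obtain ⟨p, q, -, hp, hq⟩ := ih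
    obtain ⟨p', q', hp', hq'⟩ := exists_of_nums_dens_eq_intCast v (n + 1)
    refine ⟨p', q', ?_, hp', hq'⟩
    have hdetK : (GenContFract.of v).nums n * (GenContFract.of v).dens (n + 1) -
        (GenContFract.of v).dens n * (GenContFract.of v).nums (n + 1) = (-1) ^ (n + 1) :=
      SimpContFract.determinant (s := SimpContFract.of v) hterm
    rw [hp, hq, hp', hq'] at hdetK
    have hdet : p * q' - q * p' = (-1) ^ (n + 1) := mod_cast hdetK
    have hsq : ((-1 : ℤ) ^ (n + 1)) ^ 2 = 1 := by rw [← pow_mul', pow_mul, neg_one_sq, one_pow]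
    exact ⟨-(-1) ^ (n + 1) * q, (-1) ^ (n + 1) * p, by
      linear_combination (-1) ^ (n + 1) * hdet + hsq⟩

variable [IsStrictOrderedRing K]

theorem one_le_of_den (v : K) (n : ℕ) : 1 ≤ (GenContFract.of v).dens n := by
  induction n with
  | zero => rw [zeroth_den_eq_one]
  | succ n ih => exact ih.trans of_den_mono

theorem exists_rat_of_nums_dens_eq_num_den (v : K) (n : ℕ) :
    ∃ r : ℚ, (GenContFract.of v).nums n = r.num ∧ (GenContFract.of v).dens n = r.den := by
  obtain ⟨p, q, hpq, hp, hq⟩ := exists_isCoprime_of_nums_dens_eq_intCast v n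
  have hq_pos : 0 < q := by
    have hqK : (0 : K) < q := hq ▸ zero_lt_one.trans_le (one_le_of_den v n)
    exact mod_cast hqK
  have hcop : p.natAbs.Coprime q.natAbs := Int.isCoprime_iff_nat_coprime.1 hpq
  refine ⟨p / q, ?_, ?_⟩
  · rw [Rat.num_div_eq_of_coprime hq_pos hcop, hp]
  · rw [← Int.cast_natCast, Rat.den_div_eq_of_coprime hq_pos hcop, hq]

theorem abs_sub_of_convs_le_one_div_den_sq (v : K) (n : ℕ) :
    |v - (GenContFract.of v).convs n| ≤ 1 / (GenContFract.of v).dens n ^ 2 := by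
  by_cases hterm : (GenContFract.of v).TerminatedAt n
  · rw [← of_correctness_of_terminatedAt hterm, sub_self, abs_zero]
    positivity
  · have hden : 0 < (GenContFract.of v).dens n := zero_lt_one.trans_le (one_le_of_den v n)
    refine (abs_sub_convs_le hterm).trans ?_
    rw [sq]
    gcongr
    exact of_den_mono

theorem exists_abs_natCast_mul_rat_sub_sub_intCast_le (r : ℚ) (x : K) :
    ∃ b : ℕ, 1 ≤ b ∧ b ≤ r.den ∧ ∃ t : ℤ, |b * (r : K) - x - t| ≤ 1 / (2 * r.den) := by
  obtain ⟨b, hb, hbr, hmod⟩ :=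
    exists_natCast_mul_modEq r.pos (Rat.isCoprime_num_den r) (round (r.den * x))
  obtain ⟨t, ht⟩ := hmod.symm.dvd
  refine ⟨b, hb, hbr, t, ?_⟩
  have hden : (0 : K) < r.den := mod_cast r.pos
  have htK : (b : K) * r.num - round (r.den * x) = r.den * t := mod_cast ht
  have hsub : b * (r : K) - x - t = -((r.den * x - round (r.den * x)) / r.den) := by
    rw [Rat.cast_def]
    field_simp
    linear_combination htK
  calc |b * (r : K) - x - t| = |r.den * x - round (r.den * x)| / r.den := by
        rw [hsub, abs_neg, abs_div, abs_of_pos hden]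
    _ ≤ 1 / 2 / r.den := by gcongr; exact abs_sub_round _
    _ = 1 / (2 * r.den) := div_div _ _ _

theorem exists_abs_natCast_mul_sub_sub_round_le (r : ℚ) (α γ : K) :
    ∃ b : ℕ, 1 ≤ b ∧ b ≤ r.den ∧
      |b * α - γ - round (b * α - γ)| ≤ r.den / 2 * |α - r| + 1 / (2 * r.den) := by
  obtain ⟨b, hb, hbr, t, ht⟩ :=
    exists_abs_natCast_mul_rat_sub_sub_intCast_le r (γ - r.den / 2 * (α - r))
  refine ⟨b, hb, hbr, ?_⟩
  have hcenter : |(b : K) - r.den / 2| ≤ r.den / 2 := by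
    have hbrK : (b : K) ≤ r.den := mod_cast hbr
    rw [abs_le]
    constructor <;> linarith [b.cast_nonneg (α := K)]
  calc |b * α - γ - round (b * α - γ)|
      ≤ |b * α - γ - t| := round_le _ t
    _ = |(b - r.den / 2) * (α - r) + (b * r - (γ - r.den / 2 * (α - r)) - t)| := by ring_nf
    _ ≤ |(b - r.den / 2) * (α - r)| + |b * r - (γ - r.den / 2 * (α - r)) - t| := abs_add_le _ _
    _ ≤ r.den / 2 * |α - r| + 1 / (2 * r.den) := by
        rw [abs_mul]
        gcongr

theorem stmt_6_general (α γ : K) (k : ℕ) :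
    ∃ b : ℕ, 1 ≤ b ∧ (b : K) ≤ (GenContFract.of α).dens k ∧
      |b * α - γ - round (b * α - γ)| ≤ 1 / (GenContFract.of α).dens k := by
  obtain ⟨r, hnum, hden⟩ := exists_rat_of_nums_dens_eq_num_den α k
  have happrox : |α - r| ≤ 1 / (r.den : K) ^ 2 := by
    rw [Rat.cast_def, ← hnum, ← hden, ← conv_eq_num_div_den]
    exact abs_sub_of_convs_le_one_div_den_sq α k
  obtain ⟨b, hb, hbr, hbγ⟩ := exists_abs_natCast_mul_sub_sub_round_le r α γ
  rw [hden]
  refine ⟨b, hb, mod_cast hbr, ?_⟩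
  calc |b * α - γ - round (b * α - γ)|
      ≤ r.den / 2 * |α - r| + 1 / (2 * r.den) := hbγ
    _ ≤ r.den / 2 * (1 / (r.den : K) ^ 2) + 1 / (2 * r.den) := by gcongr
    _ = 1 / r.den := by field_simp; norm_num

end

theorem stmt_6 (α : ℝ) (hα : Irrational α) (γ : ℝ) (k : ℕ) (hk : 1 ≤ k) :
    ∃ b : ℕ, 1 ≤ b ∧ (b : ℝ) ≤ 2 * qden α k + qden α (k - 1) - 1 ∧
      dni (b * α - γ) ≤ 1 / qden α k := by
  obtain ⟨b, hb, hbq, hbγ⟩ := stmt_6_general α γ k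
  have hq : 1 ≤ qden α k := one_le_of_den α k
  have hq' : 1 ≤ qden α (k - 1) := one_le_of_den α (k - 1)
  exact ⟨b, hb, hbq.trans (show qden α k ≤ _ by linarith), hbγ⟩
end
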